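/- arXiv:quant-ph/0302002 — 2 statements merged into one kernel-verified Lean document; each statement's English description precedes it below -/
import Mathlib

section
/- There exists a constant c > 0 such that for every n ≥ 2 there exists an invertible n×n matrix A over 𝔽₂ with the property that every list of transvections whose product equals A has length at least c · n² / log₂ n. -/
/-- `A` is a transvection matrix over `𝔽₂`: the identity with a single
off-diagonal entry set to `1`. -/
def IsTransvection {n : ℕ} (A : Matrix (Fin n) (Fin n) (ZMod 2)) : Prop :=
  ∃ i j : Fin n, i ≠ j ∧ A = Matrix.transvection i j 1

/-!
The proof is by counting. Padding with identity factors, every product of at most `k` transvections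
lies in `T ^ k`, where `T` consists of the identity and the `n (n - 1)` transvections; so there are
at most `(n ^ 2) ^ k` such products. Each of the `n` factors `2 ^ n - 2 ^ i` of the order of
`GL n 𝔽₂` is at least `2 ^ (n - 1)`. Hence the hardest matrix, of transvection length `k`, satisfies
`2 ^ (n (n - 1)) ≤ (n ^ 2) ^ k`, and taking logarithms bounds `k` from below.
-/

open Finset
open scoped Pointwise

section Monoid

variable {M : Type*} [Monoid M]

lemma list_prod_mem_pow_length [DecidableEq M] {S : Finset M} {L : List M}
    (hLS : ∀ b ∈ L, b ∈ S) : L.prod ∈ S ^ L.length := by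
  induction L with
  | nil => simp
  | cons b L ih =>
    rw [List.forall_mem_cons] at hLS
    rw [List.prod_cons, List.length_cons, pow_succ']
    exact mul_mem_mul hLS.1 (ih hLS.2)

lemma list_prod_mem_insert_one_pow [DecidableEq M] {S : Finset M} {L : List M} {k : ℕ}
    (hLS : ∀ b ∈ L, b ∈ S) (hLk : L.length ≤ k) : L.prod ∈ insert 1 S ^ k :=
  pow_subset_pow (subset_insert 1 S) (mem_insert_self 1 S) hLk (list_prod_mem_pow_length hLS)

lemma card_insert_one_pow_le [DecidableEq M] (S : Finset M) (k : ℕ) :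
    #(insert 1 S ^ k) ≤ (#S + 1) ^ k :=
  card_pow_le.trans (Nat.pow_le_pow_left (card_insert_le 1 S) k)

lemma exists_mem_forall_list_card_le_pow_length (S : Finset M) {U : Finset M} (hU : U.Nonempty) :
    ∃ a ∈ U, ∀ L : List M, (∀ b ∈ L, b ∈ S) → L.prod = a → #U ≤ (#S + 1) ^ L.length := by
  classical
  by_contra! short
  choose! word word_mem word_prod word_short using short
  obtain ⟨a, haU, longest⟩ := exists_max_image U (fun a ↦ (word a).length) hU
  have hU_subset : U ⊆ insert 1 S ^ (word a).length := fun b hb ↦ by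
    simpa only [word_prod b hb] using
      list_prod_mem_insert_one_pow (word_mem b hb) (longest b hb)
  exact ((card_le_card hU_subset).trans (card_insert_one_pow_le S _)).not_gt (word_short a haU)

end Monoid

lemma pow_le_card_GL (F : Type*) [Field F] [Fintype F] (n : ℕ) :
    Fintype.card F ^ (n * (n - 1)) ≤ Nat.card (GL (Fin n) F) := by
  have hq : 2 ≤ Fintype.card F := Fintype.one_lt_card
  have factor_ge (i : Fin n) :
      Fintype.card F ^ (n - 1) ≤ Fintype.card F ^ n - Fintype.card F ^ (i : ℕ) := by
    refine Nat.le_sub_of_add_le ?_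
    calc Fintype.card F ^ (n - 1) + Fintype.card F ^ (i : ℕ)
        ≤ Fintype.card F ^ (n - 1) + Fintype.card F ^ (n - 1) := by gcongr <;> omega
      _ = 2 * Fintype.card F ^ (n - 1) := (two_mul _).symm
      _ ≤ Fintype.card F * Fintype.card F ^ (n - 1) := by gcongr
      _ = Fintype.card F ^ n := mul_pow_sub_one i.pos.ne' _
  calc Fintype.card F ^ (n * (n - 1)) = ∏ _i : Fin n, Fintype.card F ^ (n - 1) := by
        rw [prod_const, card_univ, Fintype.card_fin, mul_comm, pow_mul]
    _ ≤ ∏ i : Fin n, (Fintype.card F ^ n - Fintype.card F ^ (i : ℕ)) :=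
        prod_le_prod' fun i _ ↦ factor_ge i
    _ = Nat.card (GL (Fin n) F) := (Matrix.card_GL_field n).symm

/-- The finite set of `n × n` transvections over `𝔽₂`, i.e. the C-NOT gates on `n` bits, encoded as
the image of the set of pairs of distinct indices. -/
def transvections (n : ℕ) : Finset (Matrix (Fin n) (Fin n) (ZMod 2)) :=
  univ.offDiag.image fun p ↦ Matrix.transvection p.1 p.2 1

lemma mem_transvections {n : ℕ} {A : Matrix (Fin n) (Fin n) (ZMod 2)} :
    A ∈ transvections n ↔ IsTransvection A := by
  simp [transvections, IsTransvection, eq_comm]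

lemma card_transvections_add_one_le {n : ℕ} (hn : n ≠ 0) : #(transvections n) + 1 ≤ n ^ 2 := by
  have card_le : #(transvections n) ≤ n * n - n := by
    calc #(transvections n) ≤ #(univ : Finset (Fin n)).offDiag := card_image_le
      _ = n * n - n := by rw [offDiag_card, card_univ, Fintype.card_fin]
  have : n ≤ n * n := Nat.le_mul_self n
  rw [sq]
  omega

lemma exists_isUnit_forall_two_pow_le_pow_length {n : ℕ} (hn : n ≠ 0) :
    ∃ A : Matrix (Fin n) (Fin n) (ZMod 2), IsUnit A ∧
      ∀ L : List (Matrix (Fin n) (Fin n) (ZMod 2)),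
        (∀ B ∈ L, IsTransvection B) → L.prod = A →
          2 ^ (n * (n - 1)) ≤ (n ^ 2) ^ L.length := by
  let invertibles : Finset (Matrix (Fin n) (Fin n) (ZMod 2)) :=
    univ.map ⟨((↑) : GL (Fin n) (ZMod 2) → _), Units.val_injective⟩
  have card_invertibles : 2 ^ (n * (n - 1)) ≤ #invertibles := by
    simpa only [invertibles, card_map, card_univ, Nat.card_eq_fintype_card, ZMod.card] using
      pow_le_card_GL (ZMod 2) n
  obtain ⟨A, hA, hard⟩ := exists_mem_forall_list_card_le_pow_length (transvections n)
    (univ_nonempty.map : invertibles.Nonempty)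
  obtain ⟨u, -, rfl⟩ := mem_map.mp hA
  refine ⟨u, u.isUnit, fun L hL hprod ↦ ?_⟩
  calc 2 ^ (n * (n - 1)) ≤ #invertibles := card_invertibles
    _ ≤ (#(transvections n) + 1) ^ L.length :=
        hard L (fun B hB ↦ mem_transvections.mpr (hL B hB)) hprod
    _ ≤ (n ^ 2) ^ L.length := Nat.pow_le_pow_left (card_transvections_add_one_le hn) _

lemma sq_div_logb_le_of_two_pow_le {n k : ℕ} (hn : 2 ≤ n)
    (h : 2 ^ (n * (n - 1)) ≤ (n ^ 2) ^ k) :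
    1 / 4 * (n : ℝ) ^ 2 / Real.logb 2 n ≤ k := by
  have hn_real : (2 : ℝ) ≤ n := by exact_mod_cast hn
  have hlog : 0 < Real.logb 2 n := Real.logb_pos one_lt_two (by linarith)
  have exponent_le : (n : ℝ) * (n - 1) ≤ k * (2 * Real.logb 2 n) := by
    have h_real : (2 : ℝ) ^ (n * (n - 1)) ≤ ((n : ℝ) ^ 2) ^ k := by exact_mod_cast h
    have := Real.logb_le_logb_of_le one_lt_two (by positivity) h_real
    simpa [Real.logb_pow, Nat.cast_sub (one_le_two.trans hn)] using this
  rw [div_le_iff₀ hlog]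
  have half_le : (n : ℝ) / 2 ≤ n - 1 := by linarith
  have := mul_le_mul_of_nonneg_left half_le n.cast_nonneg
  linarith

/-- Lower bound (Lemma 1): there is a constant `c > 0` such that for every
`n ≥ 2` some invertible `n × n` matrix over `𝔽₂` requires at least
`c · n² / log₂ n` transvections. -/
theorem exists_lower_bound_constant :
    ∃ c : ℝ, 0 < c ∧ ∀ n : ℕ, 2 ≤ n →
      ∃ A : Matrix (Fin n) (Fin n) (ZMod 2), IsUnit A ∧
        ∀ L : List (Matrix (Fin n) (Fin n) (ZMod 2)),
          (∀ B ∈ L, IsTransvection B) → L.prod = A →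
            c * (n : ℝ) ^ 2 / Real.logb 2 n ≤ L.length := by
  refine ⟨1 / 4, by norm_num, fun n hn ↦ ?_⟩
  obtain ⟨A, hA, hard⟩ := exists_isUnit_forall_two_pow_le_pow_length (n := n) (by omega)
  exact ⟨A, hA, fun L hL hprod ↦ sq_div_logb_le_of_two_pow_le hn (hard L hL hprod)⟩
end

section
/- For every ε > 0 there exists N such that for all n ≥ N, every invertible n×n matrix over 𝔽₂ can be written as a product of at most (1 + ε) · n² / log₂ n transvections. -/
/-!
Gaussian elimination on `m` columns at a time. Once the `m × m` pivot block is diagonal, which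
costs `O(m²)` transvections, each of the `n - m` other rows needs a combination of the `m` pivot
rows added to it. Only `q ^ m` combinations exist over a field with `q` elements; forming one in a
pivot row and undoing it costs `2m` transvections, and it is added to every row that needs it at
the cost of one transvection per row. A block thus costs at most `m² + n + 2m q ^ m`, which is
`(1 + o(1)) n` for `m = ⌊α log_q n⌋` with `α < 1`. There are about `n / m` blocks, and `α` may be
taken arbitrarily close to `1`.
-/

open Matrix Filter Topology Asymptotics

section TransvectionProducts

variable {ι R : Type*} [Fintype ι] [DecidableEq ι] [CommRing R]

/-- `M` is a product of at most `k` transvections. The transvections may have coefficient `0`,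
so that `k` is only an upper bound for the number of nontrivial factors. -/
def IsTransvectionProd (k : ℕ) (M : Matrix ι ι R) : Prop :=
  ∃ L : List (TransvectionStruct ι R),
    L.length ≤ k ∧ (L.map TransvectionStruct.toMatrix).prod = M

namespace IsTransvectionProd

variable {k l : ℕ} {M N : Matrix ι ι R}

lemma one (k : ℕ) : IsTransvectionProd k (1 : Matrix ι ι R) :=
  ⟨[], by simp, by simp⟩

lemma one_add_single {i j : ι} (hij : i ≠ j) (c : R) :
    IsTransvectionProd 1 (1 + single i j c) :=
  ⟨[⟨i, j, hij, c⟩], by simp, by simp [transvection]⟩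

lemma mono (hM : IsTransvectionProd k M) (hkl : k ≤ l) : IsTransvectionProd l M :=
  let ⟨L, hLk, hLM⟩ := hM
  ⟨L, hLk.trans hkl, hLM⟩

lemma mul (hM : IsTransvectionProd k M) (hN : IsTransvectionProd l N) :
    IsTransvectionProd (k + l) (M * N) := by
  obtain ⟨L, hLk, rfl⟩ := hM
  obtain ⟨L', hLl, rfl⟩ := hN
  exact ⟨L ++ L', by simpa using add_le_add hLk hLl, by simp⟩

lemma exists_mul_eq_one (hM : IsTransvectionProd k M) :
    ∃ N, IsTransvectionProd k N ∧ N * M = 1 := by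
  obtain ⟨L, hLk, rfl⟩ := hM
  exact ⟨_, ⟨L.reverse.map .inv, by simpa using hLk, by rw [List.map_map]⟩,
    TransvectionStruct.reverse_inv_prod_mul_prod L⟩

lemma isUnit (hM : IsTransvectionProd k M) : IsUnit M :=
  let ⟨_, _, hNM⟩ := hM.exists_mul_eq_one
  .of_mul_eq_one_right _ hNM

lemma one_add_sum {κ : Type*} (s : Finset κ) {E : κ → Matrix ι ι R} {c : κ → ℕ}
    (hE : ∀ p ∈ s, IsTransvectionProd (c p) (1 + E p))
    (hmul : (s : Set κ).Pairwise fun p q => E p * E q = 0) :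
    IsTransvectionProd (∑ p ∈ s, c p) (1 + ∑ p ∈ s, E p) := by
  classical
  induction s using Finset.induction_on with
  | empty => simpa using one 0
  | insert p s hp ih =>
    rw [Finset.forall_mem_insert] at hE
    have hprod : (1 + E p) * (1 + ∑ q ∈ s, E q) = 1 + (E p + ∑ q ∈ s, E q) := by
      have hzero : E p * ∑ q ∈ s, E q = 0 := by
        rw [Finset.mul_sum]
        exact Finset.sum_eq_zero fun q hq =>
          hmul (by simp) (by simp [hq]) (ne_of_mem_of_not_mem hq hp).symm
      rw [add_mul, one_mul, mul_add, mul_one, hzero, add_zero]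
      abel
    rw [Finset.sum_insert hp, Finset.sum_insert hp, ← hprod]
    exact hE.1.mul (ih hE.2 (hmul.mono (by simp)))

end IsTransvectionProd

end TransvectionProducts

section Support

variable {ι κ R : Type*}

/-- All nonzero entries of `E` lie in the rows `I` and the columns `J`. -/
def IsSupportedOn [Zero R] (E : Matrix ι κ R) (I : Finset ι) (J : Finset κ) : Prop :=
  ∀ i j, E i j ≠ 0 → i ∈ I ∧ j ∈ J

lemma isSupportedOn_vecMulVec [MulZeroClass R] {b : ι → R} {c : κ → R} {I : Finset ι} {J : Finset κ}
    (hb : ∀ i ∉ I, b i = 0) (hc : ∀ j ∉ J, c j = 0) :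
    IsSupportedOn (vecMulVec b c) I J := fun i j hij =>
  ⟨by_contra fun hi => hij (by simp [vecMulVec_apply, hb i hi]),
    by_contra fun hj => hij (by simp [vecMulVec_apply, hc j hj])⟩

namespace IsSupportedOn

lemma apply_eq_zero_of_row_notMem [Zero R] {E : Matrix ι κ R} {I : Finset ι} {J : Finset κ}
    (hE : IsSupportedOn E I J) {i : ι} (hi : i ∉ I) (j : κ) : E i j = 0 :=
  by_contra fun h => hi (hE i j h).1

lemma apply_eq_zero_of_col_notMem [Zero R] {E : Matrix ι κ R} {I : Finset ι} {J : Finset κ}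
    (hE : IsSupportedOn E I J) (i : ι) {j : κ} (hj : j ∉ J) : E i j = 0 :=
  by_contra fun h => hj (hE i j h).2

lemma card_image_row_le [Zero R] [Fintype R] [DecidableEq (κ → R)]
    {E : Matrix ι κ R} {I : Finset ι} {J : Finset κ} (hE : IsSupportedOn E I J) :
    (I.image E.row).card ≤ Fintype.card R ^ J.card := by
  classical
  have hinj : Set.InjOn J.restrict (I.image E.row : Set (κ → R)) := by
    simp only [Set.InjOn, Finset.mem_coe, Finset.forall_mem_image]
    refine fun i _ i' _ hii' => funext fun j => ?_
    by_cases hj : j ∈ J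
    · exact congrFun hii' ⟨j, hj⟩
    · simp [hE.apply_eq_zero_of_col_notMem _ hj]
  simpa using Finset.card_le_card_of_injOn J.restrict (fun _ _ => Finset.mem_univ _) hinj

lemma mul_eq_zero [Fintype κ] [NonUnitalNonAssocSemiring R] {ι' : Type*} {E : Matrix ι κ R}
    {F : Matrix κ ι' R} {I : Finset ι} {J I' : Finset κ} {J' : Finset ι'}
    (hE : IsSupportedOn E I J) (hF : IsSupportedOn F I' J') (hdisj : Disjoint J I') :
    E * F = 0 := by
  ext i k
  rw [mul_apply, Matrix.zero_apply]
  refine Finset.sum_eq_zero fun j _ => ?_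
  by_cases hj : j ∈ J
  · rw [hF.apply_eq_zero_of_row_notMem (Finset.disjoint_left.1 hdisj hj), mul_zero]
  · rw [hE.apply_eq_zero_of_col_notMem i hj, zero_mul]

lemma isTransvectionProd_one_add_card_mul_card [Fintype ι] [DecidableEq ι] [CommRing R]
    {E : Matrix ι ι R} {I J : Finset ι} (hE : IsSupportedOn E I J) (hIJ : Disjoint I J) :
    IsTransvectionProd (I.card * J.card) (1 + E) := by
  have hsum : E = ∑ p ∈ I ×ˢ J, single p.1 p.2 (E p.1 p.2) := by
    conv_lhs => rw [matrix_eq_sum_single E, ← Finset.sum_product']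
    refine (Finset.sum_subset (Finset.subset_univ _) fun p _ hp => ?_).symm
    rw [by_contra fun h => hp (Finset.mem_product.2 (hE p.1 p.2 h)), single_zero]
  rw [hsum, ← Finset.card_product, Finset.card_eq_sum_ones]
  refine .one_add_sum _ (fun p hp => .one_add_single ?_ _) fun p hp q hq _ => ?_
  all_goals replace hp := Finset.mem_product.1 hp
  · exact fun h => Finset.disjoint_left.1 hIJ hp.1 (h ▸ hp.2)
  · replace hq := Finset.mem_product.1 hq
    have hne : p.2 ≠ q.1 := fun h => Finset.disjoint_left.1 hIJ hq.1 (h ▸ hp.2)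
    exact single_mul_single_of_ne _ _ _ _ hne _

end IsSupportedOn

end Support

section FourRussians

variable {ι K : Type*} [Fintype ι] [DecidableEq ι] [Field K] {I J : Finset ι}

-- Accumulate the combination `c` in one row `v`, copy row `v` to the rows `I`, and restore row `v`.
lemma isTransvectionProd_one_add_vecMulVec {b c : ι → K} (hb : ∀ i ∉ I, b i = 0)
    (hc : ∀ j ∉ J, c j = 0) (hIJ : Disjoint I J) :
    IsTransvectionProd (I.card + 2 * J.card) (1 + vecMulVec b c) := by
  rcases eq_or_ne c 0 with rfl | hc0
  · simpa using IsTransvectionProd.one _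
  obtain ⟨v, hcv⟩ := Function.ne_iff.1 hc0
  have hvJ : v ∈ J := by_contra fun hv => hcv (hc v hv)
  have hvI : v ∉ I := Finset.disjoint_right.1 hIJ hvJ
  set e : ι → K := Pi.single v 1 with he
  set c' : ι → K := (c v)⁻¹ • c - e with hc'
  have he0 : ∀ i ∉ ({v} : Finset ι), e i = 0 := fun i hi => by
    simp [he, Finset.notMem_singleton.1 hi]
  have hc'0 : ∀ j ∉ J.erase v, c' j = 0 := fun j hj => by
    rcases eq_or_ne j v with rfl | hjv
    · simp [hc', he, inv_mul_cancel₀ hcv]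
    · simp [hc', he, hjv, hc j fun h => hj (Finset.mem_erase.2 ⟨hjv, h⟩)]
  set X := vecMulVec e c' with hX
  set Y := vecMulVec (c v • b) e with hY
  have hXsupp : IsSupportedOn X {v} (J.erase v) :=
    isSupportedOn_vecMulVec he0 hc'0
  have hYsupp : IsSupportedOn Y I {v} :=
    isSupportedOn_vecMulVec (fun i hi => by simp [hb i hi]) he0
  have hnegXsupp : IsSupportedOn (-X) {v} (J.erase v) := fun i j h => hXsupp i j (by simpa using h)
  have hXX : X * X = 0 := hXsupp.mul_eq_zero hXsupp (by simp)
  have hXY : X * Y = 0 :=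
    hXsupp.mul_eq_zero hYsupp (hIJ.symm.mono_left (Finset.erase_subset _ _))
  have hYX : Y + Y * X = vecMulVec b c := by
    rw [hY, hX, vecMulVec_mul_vecMulVec, show e ⬝ᵥ e = 1 by simp [he], one_smul, ← vecMulVec_add,
      hc', add_sub_cancel, smul_vecMulVec, vecMulVec_smul, smul_smul, mul_inv_cancel₀ hcv, one_smul]
  have hconj : (1 + -X) * ((1 + Y) * (1 + X)) = 1 + vecMulVec b c := by
    rw [← hYX]
    calc (1 + -X) * ((1 + Y) * (1 + X))
        = 1 + (Y + Y * X) - X * X - X * Y - X * Y * X := by noncomm_ring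
      _ = 1 + (Y + Y * X) := by simp [hXX, hXY]
  have hvdisj : Disjoint {v} (J.erase v) := by simp
  rw [← hconj]
  refine ((hnegXsupp.isTransvectionProd_one_add_card_mul_card hvdisj).mul
    ((hYsupp.isTransvectionProd_one_add_card_mul_card (by simpa using hvI)).mul
      (hXsupp.isTransvectionProd_one_add_card_mul_card hvdisj))).mono ?_
  have := Finset.card_erase_le (s := J) (a := v)
  simp only [Finset.card_singleton]
  lia

namespace IsSupportedOn

variable {E : Matrix ι ι K}

-- Rows of `E` that coincide are treated simultaneously, by one rank-one update.
lemma isTransvectionProd_one_add_card_image [DecidableEq (ι → K)] (hE : IsSupportedOn E I J)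
    (hIJ : Disjoint I J) :
    IsTransvectionProd (I.card + 2 * J.card * (I.image E.row).card) (1 + E) := by
  set fiber : (ι → K) → Finset ι := fun v => {i ∈ I | E.row i = v} with hfiber
  set b : (ι → K) → ι → K := fun v i => if i ∈ fiber v then 1 else 0 with hb
  have hb0 (v) : ∀ i ∉ fiber v, b v i = 0 := fun i hi => if_neg hi
  have hrow0 : ∀ v ∈ I.image E.row, ∀ j ∉ J, v j = 0 := by
    simp only [Finset.forall_mem_image]
    exact fun i _ j hj => hE.apply_eq_zero_of_col_notMem i hj
  have hfiberJ (v) : Disjoint (fiber v) J := hIJ.mono_left (Finset.filter_subset _ _)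
  have hsum : E = ∑ v ∈ I.image E.row, vecMulVec (b v) v := by
    ext i j
    simp only [Matrix.sum_apply, vecMulVec_apply, hb, hfiber, Finset.mem_filter]
    by_cases hi : i ∈ I
    · rw [Finset.sum_eq_single_of_mem _ (Finset.mem_image_of_mem E.row hi)]
      · simp [hi]
      · exact fun v _ hv => by simp [hv.symm]
    · simp [hi, hE.apply_eq_zero_of_row_notMem hi]
  have hcost : I.card + 2 * J.card * (I.image E.row).card =
      ∑ v ∈ I.image E.row, ((fiber v).card + 2 * J.card) := by
    rw [Finset.sum_add_distrib, Finset.sum_const, smul_eq_mul, mul_comm (2 * J.card),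
      Finset.card_eq_sum_card_image E.row I]
  rw [hcost]
  conv_rhs => rw [hsum]
  refine .one_add_sum _
    (fun v hv => isTransvectionProd_one_add_vecMulVec (hb0 v) (hrow0 v hv) (hfiberJ v))
    fun v hv w hw _ => ?_
  exact (isSupportedOn_vecMulVec (hb0 v) (hrow0 v hv)).mul_eq_zero
    (isSupportedOn_vecMulVec (hb0 w) (hrow0 w hw)) (hfiberJ w).symm

lemma isTransvectionProd_one_add [Fintype K] (hE : IsSupportedOn E I J) (hIJ : Disjoint I J) :
    IsTransvectionProd (I.card + 2 * J.card * Fintype.card K ^ J.card) (1 + E) := by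
  classical
  refine (hE.isTransvectionProd_one_add_card_image hIJ).mono ?_
  gcongr
  exact hE.card_image_row_le

end IsSupportedOn

end FourRussians

section Elimination

variable {ι : Type*} {P S T : Finset ι}

/-- The columns of `A` with index in `T` vanish off the diagonal. -/
def ColsDiagonal {R : Type*} [Zero R] (A : Matrix ι ι R) (T : Finset ι) : Prop :=
  ∀ j ∈ T, ∀ i ≠ j, A i j = 0

/-- The `S × S` block of `A` is diagonal with nonzero diagonal entries. -/
structure HasDiagonalBlock {R : Type*} [Zero R] (A : Matrix ι ι R) (S : Finset ι) : Prop where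
  apply_self_ne_zero : ∀ i ∈ S, A i i ≠ 0
  apply_eq_zero : ∀ i ∈ S, ∀ j ∈ S, i ≠ j → A i j = 0

variable [Fintype ι] [DecidableEq ι]

lemma one_add_vecMulVec_single_mul {κ R : Type*} [Semiring R] (s : ι) (c : ι → R)
    (A : Matrix ι κ R) :
    (1 + vecMulVec (Pi.single s 1) c) * A = A.updateRow s (A s + c ᵥ* A) := by
  ext i j
  rw [Matrix.add_mul, Matrix.one_mul, vecMulVec_mul, Matrix.add_apply, vecMulVec_apply,
    updateRow_apply]
  split_ifs with his
  · simp [his]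
  · simp [his]

namespace ColsDiagonal

lemma eq_diagonal {R : Type*} [Zero R] {A : Matrix ι ι R}
    (hA : ColsDiagonal A Finset.univ) : A = diagonal A.diag := by
  ext i j
  rcases eq_or_ne i j with rfl | hij
  · simp
  · simp [hij, hA j (Finset.mem_univ j) i hij]

lemma one_add_mul {R : Type*} [Semiring R] {A E : Matrix ι ι R} {I J : Finset ι}
    (hA : ColsDiagonal A P) (hE : IsSupportedOn E I J) (hPJ : Disjoint P J) :
    ColsDiagonal ((1 + E) * A) P := by
  intro j hj i hij
  have hEA : (E * A) i j = 0 := by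
    rw [mul_apply]
    refine Finset.sum_eq_zero fun k _ => ?_
    rcases eq_or_ne k j with rfl | hkj
    · rw [hE.apply_eq_zero_of_col_notMem i (Finset.disjoint_left.1 hPJ hj), zero_mul]
    · rw [hA j hj k hkj, mul_zero]
  rw [add_mul, one_mul, Matrix.add_apply, hA j hj i hij, hEA, add_zero]

lemma apply_self_ne_zero {R : Type*} [Semiring R] [Nontrivial R] {A : Matrix ι ι R}
    (hT : ColsDiagonal A T) (hA : IsUnit A) {j : ι} (hj : j ∈ T) : A j j ≠ 0 := by
  intro hjj
  have hcol : A *ᵥ Pi.single j 1 = A *ᵥ 0 := by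
    ext i
    rcases eq_or_ne i j with rfl | hij
    · simp [hjj]
    · simp [hT j hj i hij]
  simpa using congrFun (mulVec_injective_of_isUnit hA hcol) j

variable {K : Type*} [Field K] {A : Matrix ι ι K}

-- Otherwise column `s` would be a linear combination of the columns in `T`.
lemma exists_notMem_apply_ne_zero (hT : ColsDiagonal A T) (hA : IsUnit A) {s : ι} (hs : s ∉ T) :
    ∃ r ∉ T, A r s ≠ 0 := by
  by_contra! hzero
  set x : ι → K := fun t => if t ∈ T then A t s / A t t else 0 with hx
  have hcol : A *ᵥ Pi.single s 1 = A *ᵥ x := by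
    ext i
    rw [mulVec_single_one, col_apply]
    simp only [mulVec, dotProduct, hx, mul_ite, mul_zero, Finset.sum_ite_mem, Finset.univ_inter]
    by_cases hi : i ∈ T
    · rw [Finset.sum_eq_single_of_mem i hi fun t ht hti => by rw [hT t ht i hti.symm, zero_mul],
        mul_div_cancel₀ _ (hT.apply_self_ne_zero hA hi)]
    · rw [hzero i hi, Finset.sum_eq_zero fun t ht => by
        rw [hT t ht i fun h => hi (h ▸ ht), zero_mul]]
  simpa [hx, hs] using congrFun (mulVec_injective_of_isUnit hA hcol) s

end ColsDiagonal

variable {K : Type*} [Field K] {A : Matrix ι ι K}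

/-- The matrix `E` such that left multiplication by `1 + E` subtracts multiples of the rows in `S`
from all other rows so as to cancel their entries in the columns `S`, when the `S × S` block of
`A` is diagonal and invertible. -/
def eliminator (A : Matrix ι ι K) (S : Finset ι) : Matrix ι ι K :=
  of fun i j => if i ∉ S ∧ j ∈ S then -(A i j / A j j) else 0

lemma isSupportedOn_eliminator (A : Matrix ι ι K) (S : Finset ι) :
    IsSupportedOn (eliminator A S) Sᶜ S := fun i j hij => by
  simpa using (ite_ne_right_iff.1 hij).1

namespace HasDiagonalBlock

lemma one_add_eliminator_mul_apply (hS : HasDiagonalBlock A S) {i j : ι} (hi : i ∉ S)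
    (hj : j ∈ S) : ((1 + eliminator A S) * A) i j = 0 := by
  have hsum : (eliminator A S * A) i j = -(A i j / A j j) * A j j := by
    rw [mul_apply, Finset.sum_eq_single j]
    · simp [eliminator, hi, hj]
    · intro k _ hkj
      by_cases hk : k ∈ S
      · rw [hS.apply_eq_zero k hk j hj hkj, mul_zero]
      · rw [(isSupportedOn_eliminator A S).apply_eq_zero_of_col_notMem i hk, zero_mul]
    · simp
  rw [add_mul, one_mul, Matrix.add_apply, hsum, neg_mul,
    div_mul_cancel₀ _ (hS.apply_self_ne_zero j hj), add_neg_cancel]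

lemma colsDiagonal_one_add_eliminator_mul (hS : HasDiagonalBlock A S) :
    ColsDiagonal ((1 + eliminator A S) * A) S := by
  intro j hj i hij
  by_cases hi : i ∈ S
  · have hrow : (eliminator A S * A) i j = 0 := by
      rw [mul_apply]
      exact Finset.sum_eq_zero fun k _ => by
        rw [(isSupportedOn_eliminator A S).apply_eq_zero_of_row_notMem (by simpa using hi),
          zero_mul]
    rw [add_mul, one_mul, Matrix.add_apply, hS.apply_eq_zero i hi j hj hij, hrow, add_zero]
  · exact hS.one_add_eliminator_mul_apply hi hj

end HasDiagonalBlock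

lemma ColsDiagonal.one_add_eliminator_mul (hP : ColsDiagonal A P) (hS : HasDiagonalBlock A S)
    (hPS : Disjoint P S) : ColsDiagonal ((1 + eliminator A S) * A) (P ∪ S) := by
  intro j hj
  rcases Finset.mem_union.1 hj with hj | hj
  · exact hP.one_add_mul (isSupportedOn_eliminator A S) hPS j hj
  · exact hS.colsDiagonal_one_add_eliminator_mul j hj

namespace HasDiagonalBlock

variable {s : ι}

-- Row `s` of the eliminated matrix works unless its entry in column `s` vanishes, in which case
-- adding a row `r` of the eliminated matrix makes that entry nonzero.
lemma exists_row_combination (hS : HasDiagonalBlock A S) (hA : IsUnit A) (hP : ColsDiagonal A P)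
    (hPS : Disjoint P S) (hsP : s ∉ P) (hsS : s ∉ S) :
    ∃ (c : ι → K) (J : Finset ι), (∀ j ∉ J, c j = 0) ∧ s ∉ J ∧ Disjoint P J ∧
      J.card ≤ S.card + 1 ∧ (∀ j ∈ S, (A s + c ᵥ* A) j = 0) ∧ (A s + c ᵥ* A) s ≠ 0 := by
  set E := eliminator A S
  set B := (1 + E) * A with hB
  have hEsupp : IsSupportedOn E Sᶜ S := isSupportedOn_eliminator A S
  have hBS {i : ι} (hi : i ∉ S) : ∀ j ∈ S, B i j = 0 := fun j hj =>
    hS.one_add_eliminator_mul_apply hi hj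
  have hBrow (i : ι) : B i = A i + E i ᵥ* A := by
    ext j
    rw [hB, add_mul, one_mul, Matrix.add_apply, mul_apply_eq_vecMul, Pi.add_apply]
  by_cases hBss : B s s = 0
  · have hBunit : IsUnit B :=
      (hEsupp.isTransvectionProd_one_add_card_mul_card disjoint_compl_left).isUnit.mul hA
    obtain ⟨r, hr, hBrs⟩ := (hP.one_add_eliminator_mul hS hPS).exists_notMem_apply_ne_zero hBunit
      (s := s) (by simp [hsP, hsS])
    obtain ⟨hrP, hrS⟩ := not_or.1 (Finset.mem_union.not.1 hr)
    have hrow : A s + (E s + Pi.single r 1 + E r) ᵥ* A = B s + B r := by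
      rw [hBrow, hBrow, add_vecMul, add_vecMul, single_one_vecMul, row_def]
      abel
    refine ⟨E s + Pi.single r 1 + E r, insert r S, fun j hj => ?_, ?_, ?_,
      Finset.card_insert_le _ _, fun j hj => ?_, ?_⟩
    · obtain ⟨hjr, hjS⟩ := not_or.1 (Finset.mem_insert.not.1 hj)
      simp [hjr, hEsupp.apply_eq_zero_of_col_notMem _ hjS]
    · have hsr : s ≠ r := fun h => hBrs (h ▸ hBss)
      simp [hsr, hsS]
    · simp [hrP, hPS]
    · rw [hrow, Pi.add_apply, hBS hsS j hj, hBS hrS j hj, add_zero]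
    · rwa [hrow, Pi.add_apply, hBss, zero_add]
  · exact ⟨E s, S, fun j hj => hEsupp.apply_eq_zero_of_col_notMem s hj, hsS, hPS, by simp,
      fun j hj => hBrow s ▸ hBS hsS j hj, hBrow s ▸ hBss⟩

lemma exists_pivot_row (hS : HasDiagonalBlock A S) (hA : IsUnit A) (hP : ColsDiagonal A P)
    (hPS : Disjoint P S) (hsP : s ∉ P) (hsS : s ∉ S) :
    ∃ M, IsTransvectionProd (S.card + 1) M ∧ ColsDiagonal (M * A) P ∧
      HasDiagonalBlock (M * A) S ∧ (∀ j ∈ S, (M * A) s j = 0) ∧ (M * A) s s ≠ 0 := by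
  obtain ⟨c, J, hcJ, hsJ, hPJ, hJcard, hrowS, hrows⟩ :=
    hS.exists_row_combination hA hP hPS hsP hsS
  have hsupp : IsSupportedOn (vecMulVec (Pi.single s 1) c) {s} J :=
    isSupportedOn_vecMulVec (fun i hi => by simp [Finset.notMem_singleton.1 hi]) hcJ
  have hrow {i : ι} (hi : i ∈ S) (j : ι) :
      ((1 + vecMulVec (Pi.single s 1) c) * A) i j = A i j := by
    rw [one_add_vecMulVec_single_mul, updateRow_ne (ne_of_mem_of_not_mem hi hsS)]
  refine ⟨1 + vecMulVec (Pi.single s 1) c, ?_, hP.one_add_mul hsupp hPJ, ⟨?_, ?_⟩, ?_, ?_⟩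
  · exact (hsupp.isTransvectionProd_one_add_card_mul_card (by simpa using hsJ)).mono
      (by simpa using hJcard)
  · exact fun i hi => hrow hi i ▸ hS.apply_self_ne_zero i hi
  · exact fun i hi j hj hij => hrow hi j ▸ hS.apply_eq_zero i hi j hj hij
  · simpa only [one_add_vecMulVec_single_mul, updateRow_self] using hrowS
  · simpa only [one_add_vecMulVec_single_mul, updateRow_self] using hrows

lemma exists_insert_of_pivot_row (hS : HasDiagonalBlock A S) (hP : ColsDiagonal A P)
    (hsP : s ∉ P) (hsS : s ∉ S) (hrowS : ∀ j ∈ S, A s j = 0) (hss : A s s ≠ 0) :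
    ∃ M, IsTransvectionProd S.card M ∧ ColsDiagonal (M * A) P ∧
      HasDiagonalBlock (M * A) (insert s S) := by
  set b : ι → K := fun i => if i ∈ S then -(A i s / A s s) else 0 with hb
  have hsupp : IsSupportedOn (vecMulVec b (Pi.single s 1)) S {s} :=
    isSupportedOn_vecMulVec (fun i hi => if_neg hi)
      fun j hj => by simp [Finset.notMem_singleton.1 hj]
  have hentry (i j : ι) :
      ((1 + vecMulVec b (Pi.single s 1)) * A) i j = A i j + b i * A s j := by
    rw [add_mul, one_mul, vecMulVec_mul, single_one_vecMul, Matrix.add_apply,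
      vecMulVec_apply, row_apply]
  have hbs : b s = 0 := if_neg hsS
  refine ⟨1 + vecMulVec b (Pi.single s 1), ?_, hP.one_add_mul hsupp (by simpa using hsP),
    ⟨?_, ?_⟩⟩
  · simpa using hsupp.isTransvectionProd_one_add_card_mul_card (by simpa using hsS)
  · simp only [Finset.forall_mem_insert, hentry]
    refine ⟨by simpa [hbs] using hss, fun i hi => ?_⟩
    simpa [hrowS i hi] using hS.apply_self_ne_zero i hi
  · simp only [Finset.forall_mem_insert, hentry]
    refine ⟨⟨fun h => absurd rfl h, fun j hj _ => by simp [hbs, hrowS j hj]⟩,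
      fun i hi => ⟨fun _ => ?_, fun j hj hij => ?_⟩⟩
    · simp [hb, hi, hss]
    · simp [hrowS j hj, hS.apply_eq_zero i hi j hj hij]

lemma exists_insert (hS : HasDiagonalBlock A S) (hA : IsUnit A) (hP : ColsDiagonal A P)
    (hPS : Disjoint P S) (hsP : s ∉ P) (hsS : s ∉ S) :
    ∃ M, IsTransvectionProd (2 * S.card + 1) M ∧ ColsDiagonal (M * A) P ∧
      HasDiagonalBlock (M * A) (insert s S) := by
  obtain ⟨M, hM, hMP, hMS, hrowS, hss⟩ := hS.exists_pivot_row hA hP hPS hsP hsS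
  obtain ⟨N, hN, hNP, hNS⟩ := hMS.exists_insert_of_pivot_row hMP hsP hsS hrowS hss
  refine ⟨N * M, (hN.mul hM).mono (by lia), ?_, ?_⟩ <;> rwa [mul_assoc]

end HasDiagonalBlock

namespace ColsDiagonal

lemma exists_hasDiagonalBlock (hP : ColsDiagonal A P) (hA : IsUnit A) (hPS : Disjoint P S) :
    ∃ M, IsTransvectionProd (S.card ^ 2) M ∧ ColsDiagonal (M * A) P ∧
      HasDiagonalBlock (M * A) S := by
  induction S using Finset.induction_on with
  | empty => exact ⟨1, .one _, by rwa [one_mul], ⟨by simp, by simp⟩⟩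
  | insert s S hsS ih =>
    obtain ⟨hsP, hPS⟩ := Finset.disjoint_insert_right.1 hPS
    obtain ⟨M, hM, hMP, hMS⟩ := ih hPS
    obtain ⟨N, hN, hNP, hNS⟩ := hMS.exists_insert (hM.isUnit.mul hA) hMP hPS hsP hsS
    refine ⟨N * M, (hN.mul hM).mono ?_, ?_, ?_⟩
    · rw [Finset.card_insert_of_notMem hsS]
      exact le_of_eq (by ring)
    all_goals rwa [mul_assoc]

variable [Fintype K]

lemma exists_union (hP : ColsDiagonal A P) (hA : IsUnit A) (hPS : Disjoint P S) :
    ∃ M, IsTransvectionProd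
        (S.card ^ 2 + (Fintype.card ι + 2 * S.card * Fintype.card K ^ S.card)) M ∧
      ColsDiagonal (M * A) (P ∪ S) := by
  obtain ⟨M, hM, hMP, hMS⟩ := hP.exists_hasDiagonalBlock hA hPS
  have helim := (isSupportedOn_eliminator (M * A) S).isTransvectionProd_one_add
    disjoint_compl_left
  refine ⟨(1 + eliminator (M * A) S) * M, (helim.mul hM).mono ?_, ?_⟩
  · rw [add_comm]
    gcongr
    exact Finset.card_le_univ _
  · rw [mul_assoc]
    exact hMP.one_add_eliminator_mul hMS hPS

end ColsDiagonal

variable [Fintype K]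

lemma exists_isTransvectionProd_colsDiagonal (hA : IsUnit A) (m k : ℕ) (hT : T.card ≤ k * m) :
    ∃ M, IsTransvectionProd (k * (m ^ 2 + (Fintype.card ι + 2 * m * Fintype.card K ^ m))) M ∧
      ColsDiagonal (M * A) T := by
  induction k generalizing T with
  | zero =>
    obtain rfl : T = ∅ := by simpa using hT
    exact ⟨1, .one _, by simp [ColsDiagonal]⟩
  | succ k ih =>
    obtain ⟨P, hPT, hPcard⟩ := Finset.exists_subset_card_eq (min_le_left T.card (k * m))
    have hScard : (T \ P).card ≤ m := by
      rw [Finset.card_sdiff_of_subset hPT, hPcard]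
      lia
    obtain ⟨M, hM, hMP⟩ := ih (hPcard.trans_le (min_le_right _ _))
    obtain ⟨N, hN, hNT⟩ := hMP.exists_union (hM.isUnit.mul hA) Finset.disjoint_sdiff
    rw [Finset.union_sdiff_of_subset hPT, ← mul_assoc] at hNT
    refine ⟨N * M, (hN.mul hM).mono ?_, hNT⟩
    rw [add_one_mul, add_comm]
    gcongr
    exact Fintype.card_pos

theorem exists_isTransvectionProd_mul_diagonal (hA : IsUnit A) {m : ℕ} (hm : 0 < m) :
    ∃ M d, IsTransvectionProd ((Fintype.card ι / m + 1) *
        (m ^ 2 + (Fintype.card ι + 2 * m * Fintype.card K ^ m))) M ∧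
      M * diagonal d = A := by
  have hcard : (Finset.univ : Finset ι).card ≤ (Fintype.card ι / m + 1) * m :=
    (Nat.lt_div_mul_add hm).le.trans_eq (add_one_mul _ _).symm
  obtain ⟨M, hM, hMA⟩ := exists_isTransvectionProd_colsDiagonal hA m _ hcard
  obtain ⟨N, hN, hNM⟩ := hM.exists_mul_eq_one
  exact ⟨N, _, hN, by rw [← hMA.eq_diagonal, ← mul_assoc, hNM, one_mul]⟩

end Elimination

section Asymptotics

open Real

lemma isLittleO_logb_rpow_atTop (b : ℝ) {r : ℝ} (hr : 0 < r) :
    logb b =o[atTop] fun x => x ^ r :=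
  ((isLittleO_log_rpow_atTop hr).const_mul_left (log b)⁻¹).congr_left fun x => by
    rw [logb, div_eq_inv_mul]

lemma isLittleO_logb_id_atTop (b : ℝ) : logb b =o[atTop] fun x => x := by
  simpa only [rpow_one] using isLittleO_logb_rpow_atTop b one_pos

lemma isLittleO_logb_sq_id_atTop (b : ℝ) : (fun x => logb b x ^ 2) =o[atTop] fun x => x := by
  refine ((isLittleO_logb_rpow_atTop b one_half_pos).pow two_pos).congr' .rfl ?_
  filter_upwards [eventually_ge_atTop 0] with x hx
  rw [← sqrt_eq_rpow, sq_sqrt hx]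

lemma isLittleO_logb_mul_rpow_id_atTop (b : ℝ) {α : ℝ} (hα : α < 1) :
    (fun x => logb b x * x ^ α) =o[atTop] fun x => x := by
  refine ((isLittleO_logb_rpow_atTop b (sub_pos.2 hα)).mul_isBigO
    (isBigO_refl (fun x : ℝ => x ^ α) atTop)).congr' .rfl ?_
  filter_upwards [eventually_gt_atTop 0] with x hx
  rw [← rpow_add hx, sub_add_cancel, rpow_one]

lemma tendsto_blockCost_div_atTop (b : ℝ) {α : ℝ} (hα : α < 1) :
    Tendsto (fun x => (logb b x ^ 2 + (x + 2 * (logb b x * x ^ α))) / x) atTop (𝓝 1) := by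
  have hlim := (isLittleO_logb_sq_id_atTop b).tendsto_div_nhds_zero.add
    (((isLittleO_logb_mul_rpow_id_atTop b hα).tendsto_div_nhds_zero.const_mul 2).const_add 1)
  simp only [mul_zero, add_zero, zero_add] at hlim
  refine hlim.congr' ?_
  filter_upwards [eventually_ne_atTop 0] with x hx
  field_simp

lemma tendsto_blockCount_mul_logb_div_atTop {b α : ℝ} (hb : 1 < b) (hα : α ≠ 0) :
    Tendsto (fun x => (x / (α * logb b x - 1) + 1) * (logb b x / x)) atTop (𝓝 α⁻¹) := by
  have hlogb := tendsto_logb_atTop hb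
  have hdenom : Tendsto (fun x => α - (logb b x)⁻¹) atTop (𝓝 α) := by
    simpa using hlogb.inv_tendsto_atTop.const_sub α
  have hlim := (hdenom.inv₀ hα).add (isLittleO_logb_id_atTop b).tendsto_div_nhds_zero
  rw [add_zero] at hlim
  refine hlim.congr' ?_
  filter_upwards [eventually_ne_atTop 0, hlogb.eventually_ne_atTop 0] with x hx hlx
  have hfactor : α * logb b x - 1 = (α - (logb b x)⁻¹) * logb b x := by field_simp
  rw [hfactor, add_one_mul, div_mul_div_comm, mul_comm x, mul_div_mul_right _ _ hx,
    div_mul_cancel_right₀ hlx]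

lemma eventually_blockCount_mul_blockCost_le {b α C : ℝ} (hb : 1 < b) (hα : α ≠ 0) (hα1 : α < 1)
    (hC : α⁻¹ < C) :
    ∀ᶠ x in atTop, (x / (α * logb b x - 1) + 1) *
      (logb b x ^ 2 + (x + 2 * (logb b x * x ^ α))) ≤ C * x ^ 2 / logb b x := by
  have hlim := (tendsto_blockCount_mul_logb_div_atTop hb hα).mul (tendsto_blockCost_div_atTop b hα1)
  rw [mul_one] at hlim
  filter_upwards [hlim.eventually_le_const hC, eventually_gt_atTop 0,
    (tendsto_logb_atTop hb).eventually_gt_atTop 0] with x hle hx hlx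
  rw [le_div_iff₀ hlx, ← div_le_iff₀ (by positivity)]
  refine le_of_eq_of_le ?_ hle
  ring

-- The block size is `m = ⌊α log_q n⌋`, so that `q ^ m ≤ n ^ α`.
lemma exists_blockSize_cost_le {q n : ℕ} (hq : 1 < q) (hn : n ≠ 0) {α : ℝ} (hα1 : α ≤ 1)
    (hα : 1 < α * logb q n) :
    ∃ m : ℕ, 0 < m ∧ (((n / m + 1) * (m ^ 2 + (n + 2 * m * q ^ m)) : ℕ) : ℝ) ≤
      (n / (α * logb q n - 1) + 1) *
        (logb q n ^ 2 + (n + 2 * (logb q n * (n : ℝ) ^ α))) := by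
  have hq' : (1 : ℝ) < q := mod_cast hq
  have hn' : (0 : ℝ) < n := by positivity
  have hlog : 0 ≤ logb q n := logb_nonneg hq' (mod_cast Nat.one_le_iff_ne_zero.2 hn)
  set m := ⌊α * logb q n⌋₊
  have hm : (m : ℝ) ≤ α * logb q n := Nat.floor_le (zero_le_one.trans hα.le)
  have hmlog : (m : ℝ) ≤ logb q n := hm.trans (mul_le_of_le_one_left hlog hα1)
  have hpow : (q : ℝ) ^ m ≤ (n : ℝ) ^ α := by
    calc (q : ℝ) ^ m = (q : ℝ) ^ (m : ℝ) := (rpow_natCast _ _).symm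
      _ ≤ (q : ℝ) ^ (logb q n * α) := rpow_le_rpow_of_exponent_le hq'.le (by rwa [mul_comm])
      _ = (n : ℝ) ^ α := by
        rw [rpow_mul (by positivity), rpow_logb (by positivity) hq'.ne' hn']
  have hcount : ((n / m : ℕ) : ℝ) ≤ n / (α * logb q n - 1) := by
    refine Nat.cast_div_le.trans ?_
    gcongr
    exact (Nat.sub_one_lt_floor _).le
  refine ⟨m, Nat.floor_pos.2 hα.le, ?_⟩
  push_cast
  rw [mul_assoc 2 (m : ℝ)]
  gcongr

lemma eventually_exists_blockSize_cost_le {q : ℕ} (hq : 1 < q) {ε : ℝ} (hε : 0 < ε) :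
    ∀ᶠ n : ℕ in atTop, ∃ m : ℕ, 0 < m ∧
      (((n / m + 1) * (m ^ 2 + (n + 2 * m * q ^ m)) : ℕ) : ℝ) ≤
        (1 + ε) * (n : ℝ) ^ 2 / logb q n := by
  obtain ⟨α, hεα, hα1⟩ := exists_between (inv_lt_one_of_one_lt₀ (lt_add_of_pos_right 1 hε))
  have hα : 0 < α := lt_trans (by positivity) hεα
  have hq' : (1 : ℝ) < q := mod_cast hq
  have hbound := tendsto_natCast_atTop_atTop.eventually
    (eventually_blockCount_mul_blockCost_le hq' hα.ne' hα1 (inv_lt_of_inv_lt₀ (by positivity) hεα))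
  have hlarge := (((tendsto_logb_atTop hq').comp tendsto_natCast_atTop_atTop).const_mul_atTop
    hα).eventually_gt_atTop 1
  filter_upwards [hbound, hlarge, eventually_ne_atTop 0] with n hbound hlarge hn
  obtain ⟨m, hm, hcost⟩ := exists_blockSize_cost_le hq hn hα1.le hlarge
  exact ⟨m, hm, hcost.trans hbound⟩

end Asymptotics

theorem upper_bound_constant_one_general {K : Type*} [Field K] [Fintype K] (ε : ℝ) (hε : 0 < ε) :
    ∃ N : ℕ, ∀ n : ℕ, N ≤ n →
      ∀ A : Matrix (Fin n) (Fin n) K, IsUnit A →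
        ∃ (L : List (TransvectionStruct (Fin n) K)) (d : Fin n → K),
          (L.map TransvectionStruct.toMatrix).prod * diagonal d = A ∧
          (L.length : ℝ) ≤ (1 + ε) * (n : ℝ) ^ 2 / Real.logb (Fintype.card K) n := by
  obtain ⟨N, hN⟩ := eventually_atTop.1
    (eventually_exists_blockSize_cost_le (Fintype.one_lt_card (α := K)) hε)
  refine ⟨N, fun n hn A hA => ?_⟩
  obtain ⟨m, hm, hcost⟩ := hN n hn
  obtain ⟨_, d, ⟨L, hLlen, rfl⟩, hLA⟩ := exists_isTransvectionProd_mul_diagonal hA hm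
  rw [Fintype.card_fin] at hLlen
  exact ⟨L, d, hLA, (Nat.cast_le.2 hLlen).trans hcost⟩

lemma exists_list_isTransvection {n : ℕ} (L : List (TransvectionStruct (Fin n) (ZMod 2))) :
    ∃ L' : List (Matrix (Fin n) (Fin n) (ZMod 2)), (∀ B ∈ L', IsTransvection B) ∧
      L'.prod = (L.map TransvectionStruct.toMatrix).prod ∧ L'.length ≤ L.length := by
  induction L with
  | nil => exact ⟨[], by simp, by simp, by simp⟩
  | cons t L ih =>
    obtain ⟨L', hL', hprod, hlen⟩ := ih
    obtain ⟨i, j, hij, c⟩ := t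
    obtain rfl | rfl : c = 0 ∨ c = 1 := by decide +revert
    · exact ⟨L', hL', by simp [hprod], by simpa using hlen.trans (Nat.le_succ _)⟩
    · exact ⟨transvection i j 1 :: L', List.forall_mem_cons.2 ⟨⟨i, j, hij, rfl⟩, hL'⟩,
        by simp [hprod], by simpa using hlen⟩

lemma diagonal_eq_one_of_isUnit {ι : Type*} [Fintype ι] [DecidableEq ι] {d : ι → ZMod 2}
    (hd : IsUnit (diagonal d)) : diagonal d = 1 := by
  rw [isUnit_diagonal, Pi.isUnit_iff] at hd
  rw [diagonal_eq_one]
  exact funext fun i => Fin.eq_one_of_ne_zero _ (hd i).ne_zero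

/-- For every `ε > 0`, for all sufficiently large `n`, every invertible `n × n`
matrix over `𝔽₂` is a product of at most `(1 + ε) · n² / log₂ n`
transvections. -/
theorem upper_bound_constant_one (ε : ℝ) (hε : 0 < ε) :
    ∃ N : ℕ, ∀ n : ℕ, N ≤ n →
      ∀ A : Matrix (Fin n) (Fin n) (ZMod 2), IsUnit A →
        ∃ L : List (Matrix (Fin n) (Fin n) (ZMod 2)),
          (∀ B ∈ L, IsTransvection B) ∧ L.prod = A ∧
          (L.length : ℝ) ≤ (1 + ε) * (n : ℝ) ^ 2 / Real.logb 2 n := by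
  obtain ⟨N, hN⟩ := upper_bound_constant_one_general (K := ZMod 2) ε hε
  refine ⟨N, fun n hn A hA => ?_⟩
  obtain ⟨L, d, rfl, hlen⟩ := hN n hn A hA
  obtain ⟨L', hL', hprod, hlen'⟩ := exists_list_isTransvection L
  refine ⟨L', hL', ?_, (Nat.cast_le.2 hlen').trans (by simpa using hlen)⟩
  rw [hprod, diagonal_eq_one_of_isUnit (isUnit_of_mul_isUnit_right hA), mul_one]
end
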